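/- Let S_b = {0, 3, 5, 7}. Then condition (a) holds for K = 2: for every choice of 3 distinct angles φ_1, φ_2, φ_3 ∈ [-π/2, π/2), the 4×3 manifold matrix A_{S_b}(φ) with entries exp(iπ d sin φ_k), d ∈ {0, 3, 5, 7}, has rank 3. -/

import Mathlib

open Matrix

/-- Steering vector of a linear array with sensor positions `d` (in half-wavelength units)
at angle `θ`: entries `exp (i π d_n sin θ)`. -/
noncomputable def steer {N : ℕ} (d : Fin N → ℤ) (θ : ℝ) : Fin N → ℂ :=
  fun n => Complex.exp (Complex.I * (Real.pi : ℂ) * (d n : ℂ) * (Real.sin θ : ℂ))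

/-- Array manifold matrix: the `k`-th column is the steering vector at angle `θ k`. -/
noncomputable def manifold {N K : ℕ} (d : Fin N → ℤ) (θ : Fin K → ℝ) :
    Matrix (Fin N) (Fin K) ℂ :=
  Matrix.of fun n k => steer d (θ k) n

/-- The column space of a matrix, i.e. the range of `x ↦ M *ᵥ x`. -/
noncomputable def colSpace {m n : ℕ} (M : Matrix (Fin m) (Fin n) ℂ) :
    Submodule ℂ (Fin m → ℂ) :=
  LinearMap.range M.mulVecLin

/-- Angles are restricted to `[-π/2, π/2)`. -/
def angleDomain : Set ℝ := Set.Ico (-(Real.pi / 2)) (Real.pi / 2)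

/-!
Write `z_k = exp (iπ sin φ_k)`, so that the rows of the manifold matrix are the powers `z_k ^ d`;
the `z_k` are distinct because `π sin` maps the angle domain injectively into `[-π, π)`. Suppose
`∑ k, v_k z_k ^ d = 0` for `d = 0, m, m + 2, m + 4` with `m` odd. The last three relations form a
Vandermonde system in the squares `z_k ^ 2` with weights `v_k z_k ^ m`. Equal squares pair the `z_k`
off by sign, so among three of them some `z_k ^ 2` differs from the others, and `v_k = 0`. For the
remaining two nodes `a ≠ b` the coefficients are opposite; were they nonzero, then `a ^ m = b ^ m`
and `a ^ (m + 2) = b ^ (m + 2)`, which forces `a = b` because `m` and `m + 2` are coprime.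
-/

section PowerSums

variable {R : Type*} [CommRing R] [IsDomain R] {ι : Type*} [Fintype ι]

theorem eq_zero_of_forall_pow_sum_mul_pow_eq_zero_of_isolated {w y : ι → R}
    (hw : ∀ j < Fintype.card ι, ∑ i, w i * y i ^ j = 0) {k : ι} (hk : ∀ i ≠ k, y i ≠ y k) :
    w k = 0 := by
  classical
  -- `P` vanishes at every node except `y k`, and its degree is small enough for `hw` to apply.
  set P : Polynomial R := ∏ i ∈ Finset.univ.erase k, (Polynomial.X - Polynomial.C (y i)) with hP
  have hdeg : P.natDegree < Fintype.card ι := by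
    rw [hP, Polynomial.natDegree_finsetProd_X_sub_C_eq_card]
    exact Finset.card_erase_lt_of_mem (Finset.mem_univ k)
  have heval_ne : P.eval (y k) ≠ 0 := by
    simp only [hP, Polynomial.eval_prod, Polynomial.eval_sub, Polynomial.eval_X,
      Polynomial.eval_C]
    exact Finset.prod_ne_zero_iff.2 fun i hi =>
      sub_ne_zero.2 (hk i (Finset.ne_of_mem_erase hi)).symm
  have heval_eq : ∀ i ≠ k, P.eval (y i) = 0 := fun i hi => by
    rw [hP, Polynomial.eval_prod]
    exact Finset.prod_eq_zero (Finset.mem_erase.2 ⟨hi, Finset.mem_univ i⟩) (by simp)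
  have hsum : ∑ i, w i * P.eval (y i) = 0 := by
    simp only [Polynomial.eval_eq_sum_range' hdeg, Finset.mul_sum, mul_left_comm (w _)]
    rw [Finset.sum_comm]
    refine Finset.sum_eq_zero fun j hj => ?_
    rw [← Finset.mul_sum, hw j (Finset.mem_range.1 hj), mul_zero]
  rw [Fintype.sum_eq_single k fun i hi => by rw [heval_eq i hi, mul_zero]] at hsum
  exact (mul_eq_zero.1 hsum).resolve_right heval_ne

theorem exists_forall_ne_sq_ne_sq_of_odd_card (hι : Odd (Fintype.card ι)) {z : ι → R}
    (hz : Function.Injective z) : ∃ k, ∀ i ≠ k, z i ^ 2 ≠ z k ^ 2 := by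
  by_contra! hpaired
  choose partner hne hsq using hpaired
  have hneg : ∀ k, z (partner k) = -z k := fun k =>
    (sq_eq_sq_iff_eq_or_eq_neg.1 (hsq k)).resolve_left (hz.ne (hne k))
  have hinv : Function.Involutive partner := fun k => hz (by rw [hneg, hneg, neg_neg])
  obtain ⟨k, hfixed⟩ := Equiv.Perm.exists_fixed_point_of_prime (p := 2) (n := 1)
    hι.not_two_dvd_nat (σ := hinv.toPerm) (by ext k; exact hinv k)
  exact hne k hfixed

end PowerSums

section IntegerPowers

variable {K : Type*}

theorem eq_of_zpow_eq_zpow_of_isCoprime [GroupWithZero K] {a b : K} (ha : a ≠ 0) (hb : b ≠ 0)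
    {m n : ℤ} (hmn : IsCoprime m n) (hm : a ^ m = b ^ m) (hn : a ^ n = b ^ n) : a = b := by
  obtain ⟨r, s, hrs⟩ := hmn
  have recover : ∀ x : K, x ≠ 0 → (x ^ m) ^ r * (x ^ n) ^ s = x := fun x hx => by
    rw [← _root_.zpow_mul, ← _root_.zpow_mul, ← zpow_add₀ hx, mul_comm m, mul_comm n, hrs,
      zpow_one]
  rw [← recover a ha, hm, hn, recover b hb]

variable [Field K]

theorem eq_zero_of_sum_zpow_eq_zero_of_isCoprime {v z : Fin 2 → K} (hz₀ : ∀ i, z i ≠ 0)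
    (hz : Function.Injective z) {m n : ℤ} (hmn : IsCoprime m n) (h : ∑ i, v i = 0)
    (hm : ∑ i, v i * z i ^ m = 0) (hn : ∑ i, v i * z i ^ n = 0) : v = 0 := by
  rw [Fin.sum_univ_two] at h hm hn
  have hv₀ : v 0 = 0 := by
    by_contra hv₀
    have hm' : z 0 ^ m = z 1 ^ m :=
      mul_left_cancel₀ hv₀ (by linear_combination hm - z 1 ^ m * h)
    have hn' : z 0 ^ n = z 1 ^ n :=
      mul_left_cancel₀ hv₀ (by linear_combination hn - z 1 ^ n * h)
    exact zero_ne_one (hz (eq_of_zpow_eq_zpow_of_isCoprime (hz₀ 0) (hz₀ 1) hmn hm' hn'))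
  have hv₁ : v 1 = 0 := by rwa [hv₀, zero_add] at h
  exact funext (Fin.forall_fin_two.2 ⟨hv₀, hv₁⟩)

theorem exists_eq_zero_of_sum_zpow_eq_zero {v z : Fin 3 → K} (hz₀ : ∀ k, z k ≠ 0)
    (hz : Function.Injective z) {m : ℤ} (h₀ : ∑ k, v k * z k ^ m = 0)
    (h₂ : ∑ k, v k * z k ^ (m + 2) = 0) (h₄ : ∑ k, v k * z k ^ (m + 4) = 0) :
    ∃ k, v k = 0 := by
  obtain ⟨k, hk⟩ := exists_forall_ne_sq_ne_sq_of_odd_card (by decide) hz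
  have hpow : ∀ j : ℕ, ∑ i, v i * z i ^ m * (z i ^ 2) ^ j = ∑ i, v i * z i ^ (m + 2 * j) :=
    fun j => Finset.sum_congr rfl fun i _ => by
      rw [zpow_add₀ (hz₀ i), mul_assoc, ← pow_mul]
      norm_cast
  have hweight : v k * z k ^ m = 0 := by
    refine eq_zero_of_forall_pow_sum_mul_pow_eq_zero_of_isolated
      (w := fun i => v i * z i ^ m) (y := fun i => z i ^ 2) (fun j hj => ?_) hk
    rw [Fintype.card_fin] at hj
    rw [hpow]
    interval_cases j
    · simpa using h₀
    · simpa using h₂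
    · simpa using h₄
  exact ⟨k, (mul_eq_zero.1 hweight).resolve_right (zpow_ne_zero m (hz₀ k))⟩

theorem isCoprime_add_two_of_odd {m : ℤ} (hm : Odd m) : IsCoprime m (m + 2) := by
  obtain ⟨r, rfl⟩ := hm
  exact ⟨r + 1, -r, by ring⟩

theorem linearIndependent_zpow_of_odd {z : Fin 3 → K} (hz₀ : ∀ k, z k ≠ 0)
    (hz : Function.Injective z) {m : ℤ} (hm : Odd m) :
    LinearIndependent K fun k n => z k ^ (![0, m, m + 2, m + 4] : Fin 4 → ℤ) n := by
  rw [Fintype.linearIndependent_iff]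
  intro v hv
  have hrow : ∀ n, ∑ k, v k * z k ^ (![0, m, m + 2, m + 4] : Fin 4 → ℤ) n = 0 := fun n => by
    simpa only [Finset.sum_apply, Pi.smul_apply, smul_eq_mul, Pi.zero_apply] using congrFun hv n
  obtain ⟨k, hk⟩ := exists_eq_zero_of_sum_zpow_eq_zero hz₀ hz (hrow 1) (hrow 2) (hrow 3)
  have hrest : ∀ n, ∑ i : Fin 2, v (k.succAbove i) *
      z (k.succAbove i) ^ (![0, m, m + 2, m + 4] : Fin 4 → ℤ) n = 0 := fun n => by
    simpa only [Fin.sum_univ_succAbove _ k, hk, zero_mul, zero_add] using hrow n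
  have hv₀ : (fun i => v (k.succAbove i)) = 0 :=
    eq_zero_of_sum_zpow_eq_zero_of_isCoprime (fun i => hz₀ (k.succAbove i))
      (hz.comp Fin.succAbove_right_injective) (isCoprime_add_two_of_odd hm)
      (by simpa using hrest 0) (hrest 1) (hrest 2)
  exact (Fin.forall_iff_succAbove k).2 ⟨hk, congrFun hv₀⟩

end IntegerPowers

section Phasor

/-- The phase factor `exp (iπ sin θ)` between sensors half a wavelength apart: the entries of the
steering vector at angle `θ` are its powers. It is valued in `Circle`, since `Circle.exp` is
injective on half-open intervals of length `2π`. -/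
noncomputable def phasor (θ : ℝ) : Circle :=
  Circle.exp (Real.pi * Real.sin θ)

theorem steer_apply {N : ℕ} (d : Fin N → ℤ) (θ : ℝ) (n : Fin N) :
    steer d θ n = (phasor θ : ℂ) ^ d n := by
  rw [steer, phasor, Circle.coe_exp, ← Complex.exp_int_mul]
  push_cast
  ring_nf

theorem phasor_injOn_angleDomain : Set.InjOn phasor angleDomain := by
  have hsin : Set.InjOn (fun θ => Real.pi * Real.sin θ) angleDomain :=
    (mul_right_injective₀ Real.pi_ne_zero).comp_injOn (Real.injOn_sin.mono Set.Ico_subset_Icc_self)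
  have hmaps : Set.MapsTo (fun θ => Real.pi * Real.sin θ) angleDomain
      (Set.Ico (-Real.pi) Real.pi) := fun θ hθ => by
    have hlt : Real.sin θ < 1 := by
      simpa using Real.sin_lt_sin_of_lt_of_le_pi_div_two hθ.1 le_rfl hθ.2
    constructor <;> nlinarith [Real.pi_pos, Real.neg_one_le_sin θ]
  exact (Circle.exp_injOn_Ico (by linarith)).comp hsin hmaps

end Phasor

theorem stmt_11_general {m : ℤ} (hm : Odd m) {φ : Fin 3 → ℝ} (hφ : ∀ i, φ i ∈ angleDomain)
    (hinj : Function.Injective φ) : (manifold ![0, m, m + 2, m + 4] φ).rank = 3 := by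
  have hphasor : Function.Injective fun k => (phasor (φ k) : ℂ) := fun i j hij =>
    hinj (phasor_injOn_angleDomain (hφ i) (hφ j) (Circle.coe_injective hij))
  have hcols : LinearIndependent ℂ (manifold ![0, m, m + 2, m + 4] φ)ᵀ.row := by
    have hrow : (manifold ![0, m, m + 2, m + 4] φ)ᵀ.row =
        fun k n => (phasor (φ k) : ℂ) ^ (![0, m, m + 2, m + 4] : Fin 4 → ℤ) n :=
      funext₂ fun k n => steer_apply _ (φ k) n
    rw [hrow]
    exact linearIndependent_zpow_of_odd (fun k => (phasor (φ k)).coe_ne_zero) hphasor hm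
  rw [← rank_transpose, hcols.rank_matrix, Fintype.card_fin]

/-- For `S_b = {0, 3, 5, 7}`, condition (a) holds for `K = 2`: for every three distinct
angles in `[-π/2, π/2)` the `4 × 3` manifold matrix has rank `3`. -/
theorem stmt_11 :
    ∀ φ : Fin 3 → ℝ, (∀ i, φ i ∈ angleDomain) → Function.Injective φ →
      (manifold ![(0 : ℤ), 3, 5, 7] φ).rank = 3 := fun _ hφ hinj =>
  stmt_11_general (m := 3) (by decide) hφ hinj
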